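/- arXiv:2311.12714 — 2 statements merged into one kernel-verified Lean document; each statement's English description precedes it below -/
import Mathlib

section
/- Let p be an odd prime with p > 3, let m be a primitive root modulo p, define x : ℕ → ℕ by x k = m^k % p, and set q̃ = (p-1)/2. Then for every natural number q ≥ q̃ and all k ∈ ℕ, (x (k + q + 1) : ℤ) = x (k + q - q̃) - x (k + q - q̃ + 1) + x (k + q). (That is, for any lifting dimension q + 1 ≥ q̃ + 1 the companion matrix with coefficients α_{q-q̃} = 1, α_{q-q̃+1} = -1, α_q = 1 and all other α_j = 0 gives an equivalent linear representation of the Diffie–Hellman dynamics.) -/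
/-!
Since `m` has order `p - 1 = 2 * h` in the field `ZMod p`, its power `m ^ h` is a primitive square
root of unity, namely `-1`. Hence the powers of `m` change sign after `h` steps, and the
representatives in `[0, p)` of a nonzero class and of its negative add up to `p`. So the sum
`x j + x (j + h)` does not depend on `j`; comparing its values at `j` and `j + 1` gives the
recurrence.
-/

lemma pow_eq_neg_one_of_orderOf_eq_two_mul {R : Type*} [Ring R] [NoZeroDivisors R]
    {a : R} {h : ℕ} (hh : h ≠ 0) (ha : orderOf a = 2 * h) : a ^ h = -1 := by
  have hsq : (a ^ h) ^ 2 = 1 := by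
    rw [← pow_mul', ← ha, pow_orderOf_eq_one]
  have hne : a ^ h ≠ 1 := pow_ne_one_of_lt_orderOf hh (by omega)
  exact (sq_eq_one_iff.mp hsq).resolve_left hne

lemma antiperiodic_pow_of_pow_eq_neg_one {M : Type*} [Monoid M] [HasDistribNeg M]
    {a : M} {h : ℕ} (ha : a ^ h = -1) : Function.Antiperiodic (fun k : ℕ => a ^ k) h := fun k => by
  simp only [pow_add, ha, mul_neg_one]

lemma val_add_val_neg {n : ℕ} [NeZero n] {a : ZMod n} (ha : a ≠ 0) : a.val + (-a).val = n := by
  rw [ZMod.neg_val, if_neg ha, Nat.add_sub_cancel' a.val_le]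

lemma val_recurrence_of_antiperiodic {n : ℕ} [NeZero n] {u : ℕ → ZMod n} {h : ℕ}
    (hu : Function.Antiperiodic u h) (hu0 : ∀ k, u k ≠ 0) (j : ℕ) :
    ((u (j + h + 1)).val : ℤ) = (u j).val - (u (j + 1)).val + (u (j + h)).val := by
  have sum_eq (i : ℕ) : (u i).val + (u (i + h)).val = n := by
    rw [hu i, val_add_val_neg (hu0 i)]
  have hj := sum_eq j
  have hj1 := sum_eq (j + 1)
  rw [add_right_comm] at hj1
  omega

theorem dh_linear_recurrence_any_dimension_general {n m h : ℕ} (hn : 1 < n) (hh : h ≠ 0)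
    (hm : (m : ZMod n) ^ h = -1) :
    ∀ q : ℕ, h ≤ q → ∀ k : ℕ,
      ((m ^ (k + q + 1) % n : ℕ) : ℤ)
        = ((m ^ (k + q - h) % n : ℕ) : ℤ)
          - ((m ^ (k + q - h + 1) % n : ℕ) : ℤ)
          + ((m ^ (k + q) % n : ℕ) : ℤ) := by
  intro q hq k
  have : Fact (1 < n) := ⟨hn⟩
  have : NeZero n := ⟨by omega⟩
  have hunit : IsUnit (m : ZMod n) := (isUnit_pow_iff hh).mp (hm ▸ isUnit_one.neg)
  have hrec := val_recurrence_of_antiperiodic (antiperiodic_pow_of_pow_eq_neg_one hm)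
    (fun i => (hunit.pow i).ne_zero) (k + q - h)
  simpa only [← Nat.cast_pow, ZMod.val_natCast, Nat.sub_add_cancel (le_add_left hq)] using hrec

/-- For `p` an odd prime with `p > 3`, `m` a primitive root modulo `p`,
`x k = m ^ k % p`, and `q̃ = (p-1)/2`: for every `q ≥ q̃` and all `k`,
`x (k + q + 1) = x (k + q - q̃) - x (k + q - q̃ + 1) + x (k + q)`.
That is, for any lifting dimension `q + 1 ≥ q̃ + 1` the companion matrix with
coefficients `α_{q-q̃} = 1`, `α_{q-q̃+1} = -1`, `α_q = 1` (others zero) gives an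
equivalent linear representation of the Diffie–Hellman dynamics. -/
theorem dh_linear_recurrence_any_dimension (p m : ℕ) (hp : p.Prime) (hp3 : 3 < p)
    (hm : orderOf (m : ZMod p) = p - 1) :
    ∀ q : ℕ, (p - 1) / 2 ≤ q → ∀ k : ℕ,
      ((m ^ (k + q + 1) % p : ℕ) : ℤ)
        = ((m ^ (k + q - (p - 1) / 2) % p : ℕ) : ℤ)
          - ((m ^ (k + q - (p - 1) / 2 + 1) % p : ℕ) : ℤ)
          + ((m ^ (k + q) % p : ℕ) : ℤ) := by
  have : Fact p.Prime := ⟨hp⟩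
  have hodd : p % 2 = 1 := hp.eq_two_or_odd.resolve_left (by omega)
  have hh : (p - 1) / 2 ≠ 0 := by omega
  exact dh_linear_recurrence_any_dimension_general hp.one_lt hh
    (pow_eq_neg_one_of_orderOf_eq_two_mul hh (by omega))
end

section
/- Let p be an odd prime with p > 3, let m be a primitive root modulo p, define x : ℕ → ℕ by x k = m^k % p, and set q̃ = (p-1)/2. Then the square matrix M of size (q̃ + 1) × (q̃ + 1) over ℚ defined by M (k, j) = x (k + j) for k ∈ {0, ..., q̃ - 1}, j ∈ {0, ..., q̃}, and M (q̃, j) = 1 for all j ∈ {0, ..., q̃}, is invertible (has full rank q̃ + 1). -/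
/-!
Let `m` be a primitive root modulo a prime power `N > 2`, let `x_k = m ^ k % N` and `q = φ(N) / 2`,
and let `v` be a kernel vector. The last row says `∑ v_j = 0`, and since `m ^ q = -1` modulo `N`
gives `x_{k+q} = N - x_k`, the other rows say that `∑_j x_{k+j} v_j = 0` for every `k`. Taking the
Fourier coefficient of this relation at `ξ` with `ξ ^ q = -1` gives
`(∑_j v_j ξ^j) · (∑_k ξ^{-k} x_k) = 0`. If the second factor never vanishes, then `∑ v_j X^j` has
degree at most `q` and `q + 1` roots, namely `1` and the solutions of `ξ ^ q = -1`, so `v = 0`.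

The second factor is `∑_a a χ(a)` for the odd character `χ` modulo `N` with `χ(m) = ξ⁻¹`, and it
equals `-N · L(0, χ)`, because the value at `0` of a continued Dirichlet series is the Abel sum of
its coefficients. For primitive `χ` the functional equation turns `L(0, χ) ≠ 0` into Dirichlet's
`L(1, χ⁻¹) ≠ 0`; for a prime power `N` no Euler factor separates `χ` from its primitive character.
-/

open Filter Topology Asymptotics Finset
open scoped Matrix

/-! ### Values of Dirichlet series at zero -/

theorem mellin_comp_exp_neg_eq_Gamma_mul_LSeries {a : ℕ → ℂ} {g : ℝ → ℂ} {s : ℂ} (ha0 : a 0 = 0)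
    (hs : 0 < s.re) (ha : LSeriesSummable a s)
    (hg : ∀ z ∈ Set.Ioo (0 : ℝ) 1, HasSum (fun n => a n * (z : ℂ) ^ n) (g z)) :
    mellin (fun t => g (Real.exp (-t))) s = Complex.Gamma s * LSeries a s := by
  have hterm (n : ℕ) : LSeries.term a s n = a n / ((n : ℝ) : ℂ) ^ s := by
    rcases eq_or_ne n 0 with rfl | hn
    · simp [ha0]
    · simp [LSeries.term_of_ne_zero hn]
  have hpos (n : ℕ) : a n = 0 ∨ 0 < (n : ℝ) := by
    rcases n.eq_zero_or_pos with rfl | hn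
    · exact .inl ha0
    · exact .inr (mod_cast hn)
  have hsummable : Summable fun n : ℕ => ‖a n‖ / (n : ℝ) ^ s.re := by
    refine ha.norm.congr fun n => ?_
    rcases hpos n with hn | hn
    · simp [hterm, hn]
    · rw [hterm, norm_div, Complex.norm_cpow_eq_rpow_re_of_pos hn]
  have hsum := hasSum_mellin hpos hs (F := fun t => g (Real.exp (-t))) (fun t ht => by
    have hexp : Real.exp (-t) < 1 := Real.exp_lt_one_iff.mpr (neg_lt_zero.mpr ht)
    convert! hg (Real.exp (-t)) ⟨Real.exp_pos _, hexp⟩ using 4 with n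
    rw [← Complex.ofReal_pow, ← Real.exp_nat_mul, neg_mul_comm]) hsummable
  rw [← hsum.tsum_eq, LSeries, ← tsum_mul_left]
  exact tsum_congr fun n => by rw [hterm, mul_div_assoc]

theorem differentiableAt_mellin_comp_exp_neg {g : ℝ → ℂ} {s : ℂ} (hs : -1 < s.re)
    (hg : ∀ z ∈ Set.Icc (0 : ℝ) 1, DifferentiableAt ℝ g z) (hg0 : g 0 = 0) (hg1 : g 1 = 0) :
    DifferentiableAt ℂ (mellin fun t => g (Real.exp (-t))) s := by
  have hcomp (t : ℝ) (ht : 0 ≤ t) : DifferentiableAt ℝ (fun t => g (Real.exp (-t))) t :=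
    (hg _ ⟨(Real.exp_pos _).le, Real.exp_le_one_iff.mpr (neg_nonpos.mpr ht)⟩).comp t (by fun_prop)
  have hcont : ContinuousOn (fun t => g (Real.exp (-t))) (Set.Ioi 0) := fun t ht =>
    (hcomp t (le_of_lt ht)).continuousAt.continuousWithinAt
  have hinfty : (fun t => g (Real.exp (-t))) =O[atTop] fun t => Real.exp (-1 * t) := by
    have hbig := (hg 0 ⟨le_rfl, zero_le_one⟩).isBigO_sub
    simp only [hg0, sub_zero] at hbig
    simpa only [neg_one_mul, Function.comp_def] using
      hbig.comp_tendsto (Real.tendsto_exp_atBot.comp tendsto_neg_atTop_atBot)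
  have hzero : (fun t => g (Real.exp (-t))) =O[𝓝[>] 0] fun t : ℝ => t ^ (-(-1) : ℝ) := by
    have hbig := (hcomp 0 le_rfl).isBigO_sub
    simp only [neg_zero, Real.exp_zero, hg1, sub_zero] at hbig
    simpa only [neg_neg, Real.rpow_one] using hbig.mono nhdsWithin_le_nhds
  exact mellin_differentiableAt_of_isBigO_rpow_exp one_pos
    (hcont.locallyIntegrableOn measurableSet_Ioi) hinfty hzero hs

theorem eq_zero_of_eq_LSeries_of_powerSeries_one_eq_zero {a : ℕ → ℂ} {g : ℝ → ℂ} {f : ℂ → ℂ}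
    (ha0 : a 0 = 0) (ha : ∀ s : ℂ, 1 < s.re → LSeriesSummable a s)
    (hsum : ∀ z ∈ Set.Ico (0 : ℝ) 1, HasSum (fun n => a n * (z : ℂ) ^ n) (g z))
    (hg : ∀ z ∈ Set.Icc (0 : ℝ) 1, DifferentiableAt ℝ g z) (hg1 : g 1 = 0)
    (hf : Differentiable ℂ f) (hfa : ∀ s : ℂ, 1 < s.re → f s = LSeries a s) : f 0 = 0 := by
  have hg0 : g 0 = 0 := by
    refine (hsum 0 ⟨le_rfl, zero_lt_one⟩).unique ?_
    convert hasSum_zero (α := ℂ) (β := ℕ) using 2 with n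
    rcases eq_or_ne n 0 with rfl | hn <;> simp [*]
  let U : Set ℂ := {s | -1 < s.re}
  have hU : IsOpen U := isOpen_lt continuous_const Complex.continuous_re
  have hmellin : AnalyticOnNhd ℂ
      (fun s => mellin (fun t => g (Real.exp (-t))) s * (Complex.Gamma s)⁻¹) U :=
    DifferentiableOn.analyticOnNhd (fun s hs =>
      ((differentiableAt_mellin_comp_exp_neg hs hg hg0 hg1).mul
        (Complex.differentiable_one_div_Gamma s)).differentiableWithinAt) hU
  have heq : f =ᶠ[𝓝 2] fun s => mellin (fun t => g (Real.exp (-t))) s * (Complex.Gamma s)⁻¹ := by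
    filter_upwards [(isOpen_lt continuous_const Complex.continuous_re).mem_nhds
      (show (1 : ℝ) < (2 : ℂ).re by simp)] with s (hs : 1 < s.re)
    have hs0 : 0 < s.re := one_pos.trans hs
    rw [hfa s hs, mellin_comp_exp_neg_eq_Gamma_mul_LSeries ha0 hs0 (ha s hs)
      fun z hz => hsum z (Set.Ioo_subset_Ico_self hz),
      mul_comm, inv_mul_cancel_left₀ (Complex.Gamma_ne_zero_of_re_pos hs0)]
  have hf0 := hf.differentiableOn.analyticOnNhd hU |>.eqOn_of_preconnected_of_eventuallyEq hmellin
    (convex_halfSpace_re_gt (-1)).isPreconnected (show -1 < (2 : ℂ).re by norm_num) heq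
    (show -1 < (0 : ℂ).re by norm_num)
  -- `Complex.Gamma 0 = 0` by convention, so its inverse is the true value `0` of `1 / Γ` there.
  simpa only [Complex.Gamma_zero, inv_zero, mul_zero] using hf0

theorem apply_zero_eq_powerSeries_one_of_eq_LSeries {a : ℕ → ℂ} {g : ℝ → ℂ} {f : ℂ → ℂ}
    (ha0 : a 0 = 0) (ha : ∀ s : ℂ, 1 < s.re → LSeriesSummable a s)
    (hsum : ∀ z ∈ Set.Ico (0 : ℝ) 1, HasSum (fun n => a n * (z : ℂ) ^ n) (g z))
    (hg : ∀ z ∈ Set.Icc (0 : ℝ) 1, DifferentiableAt ℝ g z)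
    (hf : Differentiable ℂ f) (hfa : ∀ s : ℂ, 1 < s.re → f s = LSeries a s) : f 0 = g 1 := by
  -- Subtracting `g 1` from the coefficient of `1 ^ (-s)` makes the power series vanish at `1`.
  let δ : ℕ → ℂ := g 1 • LSeries.delta
  have hδ (s : ℂ) : LSeriesSummable δ s := LSeriesSummable.smul _ <|
    (hasSum_ite_eq 1 1).summable.congr fun n => (LSeries.term_delta s n).symm
  have hδsum (z : ℝ) : HasSum (fun n => δ n * (z : ℂ) ^ n) (g 1 * z) := by
    convert hasSum_ite_eq 1 (g 1 * (z : ℂ)) using 2 with n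
    by_cases hn : n = 1 <;> simp [δ, LSeries.delta, hn]
  refine sub_eq_zero.mp <| eq_zero_of_eq_LSeries_of_powerSeries_one_eq_zero
    (a := a - δ) (g := fun z => g z - g 1 * z) (f := fun s => f s - g 1)
    (by simp [δ, LSeries.delta, ha0]) (fun s hs => (ha s hs).sub (hδ s))
    (fun z hz => by simpa only [Pi.sub_apply, sub_mul] using (hsum z hz).sub (hδsum z))
    (fun z hz => (hg z hz).sub (by fun_prop)) (by simp) (hf.sub_const _) fun s hs => ?_
  rw [LSeries_sub (ha s hs) (hδ s), LSeries_smul, LSeries_delta, hfa s hs]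
  simp

/-! ### Periodic sequences -/

theorem sum_range_periodic_shift {M : Type*} [AddCommMonoid M] {f : ℕ → M} {T : ℕ}
    (hf : Function.Periodic f T) (j : ℕ) :
    ∑ k ∈ range T, f (k + j) = ∑ k ∈ range T, f k := by
  have hmod := congrArg (fun s => (s.map f).sum) (Nat.multiset_Ico_map_mod j T)
  simp only [Multiset.map_map, Function.comp_def, hf.map_mod_nat] at hmod
  calc ∑ k ∈ range T, f (k + j) = ∑ k ∈ Ico j (j + T), f k := by
        simp only [sum_Ico_eq_sum_range, add_tsub_cancel_left, add_comm _ j]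
    _ = ∑ k ∈ range T, f k := hmod

theorem hasSum_periodic_mul_pow {𝕜 : Type*} [NormedField 𝕜] [CompleteSpace 𝕜] {f : ℕ → 𝕜} {N : ℕ}
    (hN : N ≠ 0) (hf : Function.Periodic f N) {z : 𝕜} (hz : ‖z‖ < 1) :
    HasSum (fun n => f n * z ^ n) ((∑ n ∈ range N, f n * z ^ n) / (1 - z ^ N)) := by
  have hzN : 1 - z ^ N ≠ 0 := sub_ne_zero.mpr fun h => by
    have := pow_lt_one₀ (norm_nonneg z) hz hN
    rw [← norm_pow, ← h, norm_one] at this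
    exact this.false
  have hsummable : Summable fun n => f n * z ^ n := by
    refine .of_norm_bounded (g := fun n => (∑ i ∈ range N, ‖f i‖) * ‖z‖ ^ n)
      ((summable_geometric_of_lt_one (norm_nonneg z) hz).mul_left _) fun n => ?_
    rw [norm_mul, norm_pow, ← hf.map_mod_nat n]
    gcongr
    exact single_le_sum (f := fun i => ‖f i‖) (fun _ _ => norm_nonneg _)
      (mem_range.mpr (n.mod_lt (Nat.pos_of_ne_zero hN)))
  have hblock := hsummable.sum_add_tsum_nat_add N
  simp only [hf _, pow_add, ← mul_assoc, tsum_mul_right] at hblock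
  rw [hsummable.hasSum_iff, eq_div_iff hzN]
  linear_combination -hblock

theorem sum_mul_pow_eq_of_sum_eq_zero {R : Type*} [CommRing R] {f : ℕ → R} {N : ℕ}
    (hsum : ∑ n ∈ range N, f n = 0) (z : R) :
    ∑ n ∈ range N, f n * z ^ n =
      (1 - z) * -∑ n ∈ range N, f n * ∑ i ∈ range n, z ^ i := by
  rw [mul_neg, mul_sum, ← sub_eq_zero, sub_neg_eq_add, ← sum_add_distrib, ← hsum]
  exact sum_congr rfl fun n _ => by rw [mul_left_comm, mul_neg_geom_sum]; ring

theorem hasSum_periodic_mul_pow_of_sum_eq_zero {𝕜 : Type*} [NormedField 𝕜] [CompleteSpace 𝕜]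
    {f : ℕ → 𝕜} {N : ℕ} (hN : N ≠ 0) (hf : Function.Periodic f N) (hsum : ∑ n ∈ range N, f n = 0)
    {z : 𝕜} (hz : ‖z‖ < 1) :
    HasSum (fun n => f n * z ^ n)
      ((-∑ n ∈ range N, f n * ∑ i ∈ range n, z ^ i) / ∑ i ∈ range N, z ^ i) := by
  have hz1 : 1 - z ≠ 0 := sub_ne_zero.mpr fun h => by simp [← h] at hz
  convert hasSum_periodic_mul_pow hN hf hz using 1
  rw [sum_mul_pow_eq_of_sum_eq_zero hsum, ← mul_neg_geom_sum, mul_div_mul_left _ _ hz1]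

theorem sum_zmod_eq_sum_range {M : Type*} [AddCommMonoid M] {N : ℕ} [NeZero N] (f : ZMod N → M) :
    ∑ a, f a = ∑ n ∈ range N, f n := by
  refine sum_bij' (fun a _ => a.val) (fun n _ => n) ?_ ?_ ?_ ?_ ?_
  all_goals simp +contextual [ZMod.val_lt, Nat.mod_eq_of_lt]

/-! ### Nonvanishing of `L(0, χ)` for odd characters -/

theorem geom_sum_ofReal_ne_zero {N : ℕ} (hN : N ≠ 0) {z : ℝ} (hz : 0 ≤ z) :
    ∑ i ∈ range N, (z : ℂ) ^ i ≠ 0 :=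
  mod_cast (geom_sum_pos hz hN).ne'

theorem LFunction_apply_zero {N : ℕ} [NeZero N] {χ : DirichletCharacter ℂ N} (hχ : χ ≠ 1) :
    χ.LFunction 0 = -(∑ a : ZMod N, χ a * a.val) / N := by
  have hN := NeZero.ne N
  have hN1 : N ≠ 1 := by
    rintro rfl
    exact hχ (DirichletCharacter.level_one χ)
  have hsum : ∑ n ∈ range N, χ n = 0 := by
    rw [← sum_zmod_eq_sum_range (fun a => χ a), χ.sum_eq_zero_of_ne_one hχ]
  have hper : Function.Periodic (fun n : ℕ => χ n) N := fun n => by simp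
  let g (z : ℝ) : ℂ :=
    (-∑ n ∈ range N, χ n * ∑ i ∈ range n, (z : ℂ) ^ i) / ∑ i ∈ range N, (z : ℂ) ^ i
  have hg (z : ℝ) (hz : z ∈ Set.Icc (0 : ℝ) 1) : DifferentiableAt ℝ g z := by
    refine DifferentiableAt.div ?_ ?_ (geom_sum_ofReal_ne_zero hN hz.1) <;> fun_prop
  have hgsum (z : ℝ) (hz : z ∈ Set.Ico (0 : ℝ) 1) :
      HasSum (fun n : ℕ => χ n * (z : ℂ) ^ n) (g z) :=
    hasSum_periodic_mul_pow_of_sum_eq_zero hN hper hsum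
      (by simpa [abs_of_nonneg hz.1] using hz.2)
  have habel : χ.LFunction 0 = g 1 := apply_zero_eq_powerSeries_one_of_eq_LSeries
    (by simpa using χ.map_zero' hN1) (fun s hs => ZMod.LSeriesSummable_of_one_lt_re χ hs) hgsum hg
    (DirichletCharacter.differentiable_LFunction hχ) fun s hs => χ.LFunction_eq_LSeries hs
  rw [habel, sum_zmod_eq_sum_range]
  simp only [g, Complex.ofReal_one, one_pow, sum_const, card_range, nsmul_eq_mul, mul_one]
  congr 2
  exact sum_congr rfl fun n hn => by rw [ZMod.val_cast_of_lt (mem_range.mp hn)]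

theorem ne_one_of_odd {N : ℕ} {χ : DirichletCharacter ℂ N} (hχ : χ.Odd) : χ ≠ 1 := by
  rintro rfl
  rw [DirichletCharacter.Odd, MulChar.one_apply isUnit_one.neg] at hχ
  norm_num at hχ

theorem LFunction_apply_zero_ne_zero_of_isPrimitive {N : ℕ} [NeZero N] {χ : DirichletCharacter ℂ N}
    (hχ : χ.Odd) (hprim : χ.IsPrimitive) : χ.LFunction 0 ≠ 0 := by
  have hχ1 : χ ≠ 1 := ne_one_of_odd hχ
  have hN1 : N ≠ 1 := by
    rintro rfl
    exact hχ1 (DirichletCharacter.level_one χ)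
  have hprim' : χ⁻¹.IsPrimitive := by
    rwa [DirichletCharacter.isPrimitive_def, DirichletCharacter.conductor_inv]
  have hfe := hprim'.completedLFunction_one_sub 0
  have hone := DirichletCharacter.LFunction_apply_one_ne_zero (inv_ne_one.mpr hχ1)
  rw [DirichletCharacter.LFunction_eq_completed_div_gammaFactor _ _ (.inr hN1)] at hone ⊢
  rw [hχ.gammaFactor_def, zero_add, Complex.Gammaℝ_one, div_one]
  rw [sub_zero, inv_inv] at hfe
  intro hzero
  rw [hfe, hzero, mul_zero, zero_div] at hone
  exact hone rfl

theorem odd_primitiveCharacter {R : Type*} [CommRing R] {N : ℕ} {χ : DirichletCharacter R N}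
    (hχ : χ.Odd) : χ.primitiveCharacter.Odd := by
  have h := DirichletCharacter.changeLevel_eq_cast_of_dvd' χ.primitiveCharacter
    χ.conductor_dvd_level (a := -1) isCoprime_one_left.neg_left
  push_cast [DirichletCharacter.changeLevel_primitiveCharacter] at h
  exact h.symm.trans hχ

theorem prime_dvd_of_dvd_isPrimePow {N p d : ℕ} (hN : IsPrimePow N) (hp : p.Prime) (hpN : p ∣ N)
    (hd : d ∣ N) (hd1 : d ≠ 1) : p ∣ d := by
  obtain ⟨ℓ, hℓ, hℓd⟩ := Nat.exists_prime_and_dvd hd1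
  exact (isPrimePow_iff_unique_prime_dvd.mp hN).unique ⟨hp, hpN⟩ ⟨hℓ, hℓd.trans hd⟩ ▸ hℓd

theorem LFunction_apply_zero_ne_zero_of_isPrimePow {N : ℕ} [NeZero N] (hN : IsPrimePow N)
    {χ : DirichletCharacter ℂ N} (hχ : χ.Odd) : χ.LFunction 0 ≠ 0 := by
  have : NeZero χ.conductor := ⟨χ.conductor_ne_zero⟩
  have hcond : χ.conductor ≠ 1 :=
    mt DirichletCharacter.eq_one_iff_conductor_eq_one.mpr (ne_one_of_odd hχ)
  have hfac := DirichletCharacter.LFunction_changeLevel χ.conductor_dvd_level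
    χ.primitiveCharacter (s := 0) (.inr zero_ne_one)
  have hprod : ∏ p ∈ N.primeFactors, (1 - χ.primitiveCharacter p * (p : ℂ) ^ (-0 : ℂ)) = 1 := by
    refine prod_eq_one fun p hp => ?_
    have hp' := Nat.prime_of_mem_primeFactors hp
    have hpd := prime_dvd_of_dvd_isPrimePow hN hp' (Nat.dvd_of_mem_primeFactors hp)
      χ.conductor_dvd_level hcond
    rw [MulChar.map_nonunit, zero_mul, sub_zero]
    rwa [ZMod.isUnit_prime_iff_not_dvd hp', not_not]
  rw [DirichletCharacter.changeLevel_primitiveCharacter, hprod, mul_one] at hfac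
  exact hfac ▸ LFunction_apply_zero_ne_zero_of_isPrimitive (odd_primitiveCharacter hχ)
    χ.primitiveCharacter_isPrimitive

theorem sum_mul_val_ne_zero_of_odd {N : ℕ} [NeZero N] (hN : IsPrimePow N)
    {χ : DirichletCharacter ℂ N} (hχ : χ.Odd) : ∑ a : ZMod N, χ a * a.val ≠ 0 := fun h =>
  LFunction_apply_zero_ne_zero_of_isPrimePow hN hχ <| by
    rw [LFunction_apply_zero (ne_one_of_odd hχ), h, neg_zero, zero_div]

/-! ### Powers of a primitive root -/

theorem sum_eq_sum_range_orderOf {R M : Type*} [CommMonoid R] [Fintype R] [AddCommMonoid M]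
    {g : Rˣ} (hg : Subgroup.zpowers g = ⊤) {f : R → M} (hf : ∀ a, ¬IsUnit a → f a = 0) :
    ∑ a, f a = ∑ k ∈ range (orderOf g), f ((g : R) ^ k) := by
  classical
  rw [← orderOf_units, ← sum_image (g := fun k => (g : R) ^ k) (f := f) fun k hk l hl =>
    pow_injOn_Iio_orderOf (mem_range.mp hk) (mem_range.mp hl)]
  refine (sum_subset (subset_univ _) fun a _ ha => hf a ?_).symm
  rintro ⟨u, rfl⟩
  obtain ⟨k, rfl⟩ := mem_powers_iff_mem_zpowers.mpr (hg ▸ Subgroup.mem_top u)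
  refine ha (mem_image.mpr ⟨k % orderOf (g : R), mem_range.mpr ?_, ?_⟩)
  · rw [orderOf_units]
    exact Nat.mod_lt _ (orderOf_pos g)
  · simp only [pow_mod_orderOf, Units.val_pow_eq_pow_val]

theorem pow_half_orderOf_eq {G : Type*} [Group G] {g x : G} {q : ℕ} (hg : orderOf g = 2 * q)
    (hx : x ∈ Subgroup.zpowers g) (hx2 : x ^ 2 = 1) (hx1 : x ≠ 1) : g ^ q = x := by
  obtain ⟨k, rfl⟩ := Subgroup.mem_zpowers_iff.mp hx
  have hg1 : (g ^ q) ^ 2 = 1 := by rw [← pow_mul', ← hg, pow_orderOf_eq_one]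
  have hdvd : (q : ℤ) ∣ k := by
    rw [← zpow_natCast, ← zpow_mul', ← orderOf_dvd_iff_zpow_eq_one, hg] at hx2
    exact Int.dvd_of_mul_dvd_mul_left two_ne_zero (mod_cast hx2)
  obtain ⟨l, rfl⟩ := hdvd
  rw [zpow_mul, zpow_natCast] at hx1 ⊢
  rcases Int.even_or_odd' l with ⟨i, rfl | rfl⟩
  · exact absurd (by rw [zpow_mul, zpow_ofNat, hg1, one_zpow]) hx1
  · rw [zpow_add, zpow_mul, zpow_ofNat, hg1, one_zpow, one_mul, zpow_one]

theorem zpowers_eq_top_of_orderOf_eq_totient {N : ℕ} [NeZero N] {g : (ZMod N)ˣ}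
    (hg : orderOf g = N.totient) : Subgroup.zpowers g = ⊤ :=
  Subgroup.eq_top_of_card_eq _ <| by
    rw [Nat.card_zpowers, hg, Nat.card_eq_fintype_card, ZMod.card_units_eq_totient]

theorem pow_totient_half {N : ℕ} (hN : 2 < N) {g : (ZMod N)ˣ}
    (hg : orderOf g = N.totient) : g ^ (N.totient / 2) = -1 := by
  have : Fact (2 < N) := ⟨hN⟩
  have : NeZero N := ⟨by lia⟩
  refine pow_half_orderOf_eq (hg.trans (Nat.two_mul_div_two_of_even (Nat.totient_even hN)).symm)
    (by simp [zpowers_eq_top_of_orderOf_eq_totient hg]) neg_one_sq fun h => ?_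
  exact ZMod.neg_one_ne_one (congrArg Units.val h)

theorem val_neg_add_val {N : ℕ} [NeZero N] {a : ZMod N} (ha : a ≠ 0) : (-a).val + a.val = N := by
  have : NeZero a := ⟨ha⟩
  rw [ZMod.val_neg_of_ne_zero, Nat.sub_add_cancel a.val_lt.le]

theorem val_pow_add_half_add_val_pow {N : ℕ} (hN : 2 < N) {g : (ZMod N)ˣ}
    (hg : orderOf g = N.totient) (k : ℕ) :
    ((g : ZMod N) ^ (k + N.totient / 2)).val + ((g : ZMod N) ^ k).val = N := by
  have : NeZero N := ⟨by lia⟩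
  have : Fact (1 < N) := ⟨by lia⟩
  have hhalf : (g : ZMod N) ^ (N.totient / 2) = -1 := by
    simpa using congrArg Units.val (pow_totient_half hN hg)
  rw [pow_add, hhalf, mul_neg_one]
  exact val_neg_add_val (g.isUnit.pow k).ne_zero

theorem sum_pow_mul_val_pow_ne_zero {N : ℕ} (hN : IsPrimePow N) (hN2 : 2 < N) {g : (ZMod N)ˣ}
    (hg : orderOf g = N.totient) {ζ : ℂ} (hζ : ζ ^ (N.totient / 2) = -1) :
    ∑ k ∈ range N.totient, ζ ^ k * ((g : ZMod N) ^ k).val ≠ 0 := by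
  have : NeZero N := ⟨hN.ne_zero⟩
  have hgen : Subgroup.zpowers g = ⊤ := zpowers_eq_top_of_orderOf_eq_totient hg
  have hζ1 : ζ ^ N.totient = 1 := by
    rw [← Nat.two_mul_div_two_of_even (Nat.totient_even hN2), pow_mul', hζ, neg_one_sq]
  obtain ⟨ζ, rfl⟩ : IsUnit ζ := .of_pow_eq_one hζ1 (Nat.totient_pos.mpr (by lia)).ne'
  have hmem : ζ ∈ rootsOfUnity (Fintype.card (ZMod N)ˣ) ℂ := by
    rwa [mem_rootsOfUnity', ZMod.card_units_eq_totient]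
  obtain ⟨χ, hχ⟩ : ∃ χ : DirichletCharacter ℂ N, χ g = ζ :=
    ⟨_, MulChar.ofRootOfUnity_spec hmem fun u => hgen ▸ Subgroup.mem_top u⟩
  have hodd : χ.Odd := by
    have := congrArg χ (congrArg Units.val (pow_totient_half hN2 hg))
    simpa [hχ, hζ, DirichletCharacter.Odd] using this.symm
  have hmoment := sum_mul_val_ne_zero_of_odd hN hodd
  rw [sum_eq_sum_range_orderOf hgen fun a ha => by rw [χ.map_nonunit ha, zero_mul], hg] at hmoment
  simpa only [map_pow, hχ] using hmoment

/-! ### Bordered Hankel matrices -/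

/-- The Hankel matrix with entries `x (k + j)` for `k < q`, `j ≤ q`, bordered below by a row of
ones to make it square. -/
def borderedHankel {R : Type*} [One R] (q : ℕ) (x : ℕ → R) : Matrix (Fin (q + 1)) (Fin (q + 1)) R :=
  Matrix.of fun k j => if (k : ℕ) = q then 1 else x (k + j)

theorem map_borderedHankel {R S : Type*} [Semiring R] [Semiring S] (f : R →+* S) (q : ℕ)
    (x : ℕ → R) : (borderedHankel q x).map f = borderedHankel q fun k => f (x k) := by
  ext k j
  simp only [borderedHankel, Matrix.map_apply, Matrix.of_apply, apply_ite f, map_one]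

theorem sum_pow_mul_mul_sum_pow_mul {R : Type*} [CommRing R] {x : ℕ → R} {T n : ℕ}
    (hx : Function.Periodic x T) {ξ ζ : R} (hξζ : ξ * ζ = 1) (hζ : ζ ^ T = 1) (v : Fin n → R) :
    (∑ j : Fin n, ξ ^ (j : ℕ) * v j) * ∑ k ∈ range T, ζ ^ k * x k =
      ∑ k ∈ range T, ζ ^ k * ∑ j : Fin n, x (k + j) * v j := by
  have hper : Function.Periodic (fun k => ζ ^ k * x k) T := fun k => by
    simp only [pow_add, hζ, mul_one, hx k]
  simp only [mul_sum univ, sum_mul]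
  rw [sum_comm]
  refine sum_congr rfl fun j _ => ?_
  rw [← sum_range_periodic_shift hper j, mul_sum]
  refine sum_congr rfl fun k _ => ?_
  have hcancel : ξ ^ (j : ℕ) * ζ ^ (j : ℕ) = 1 := by rw [← mul_pow, hξζ, one_pow]
  rw [pow_add]
  linear_combination ζ ^ k * x (k + j) * v j * hcancel

theorem eq_zero_of_sum_eq_zero_of_sum_pow_mul_eq_zero {R : Type*} [CommRing R] [IsDomain R]
    {q : ℕ} (hq : 0 < q) {η : R} (hη : IsPrimitiveRoot η (2 * q)) {v : Fin (q + 1) → R}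
    (h1 : ∑ j, v j = 0)
    (hroot : ∀ ξ : R, ξ ^ q = -1 → ∑ j : Fin (q + 1), ξ ^ (j : ℕ) * v j = 0) : v = 0 := by
  have hηq : η ^ q = -1 := (hη.pow (by lia) (mul_comm 2 q)).eq_neg_one_of_two_right
  -- By truncated subtraction the exponents `2 * i - 1` are `0, 1, 3, …, 2 * q - 1`.
  refine Matrix.eq_zero_of_forall_index_sum_pow_mul_eq_zero
    (f := fun i : Fin (q + 1) => η ^ (2 * (i : ℕ) - 1)) ?_ fun i => ?_
  · intro i j hij
    have := hη.pow_inj (by lia) (by lia) hij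
    lia
  · rcases Nat.eq_zero_or_pos i with hi | hi
    · simpa only [hi, mul_zero, zero_tsub, pow_zero, one_pow, one_mul] using h1
    · refine hroot _ ?_
      rw [pow_right_comm, hηq, Odd.neg_one_pow ⟨i - 1, by lia⟩]

section

variable {R : Type*} [CommRing R] {q : ℕ} {x : ℕ → R} {v : Fin (q + 1) → R} {c : R}

theorem sum_eq_zero_of_borderedHankel_mulVec_eq_zero (hv : borderedHankel q x *ᵥ v = 0) :
    ∑ j, v j = 0 := by
  simpa [borderedHankel, Matrix.mulVec, dotProduct] using congrFun hv (Fin.last q)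

theorem sum_mul_eq_zero_of_borderedHankel_mulVec_eq_zero (hx : ∀ k, x (k + q) + x k = c)
    (hv : borderedHankel q x *ᵥ v = 0) {k : ℕ} (hk : k < 2 * q) :
    ∑ j : Fin (q + 1), x (k + j) * v j = 0 := by
  have hrow {k : ℕ} (hk : k < q) : ∑ j : Fin (q + 1), x (k + j) * v j = 0 := by
    simpa [borderedHankel, Matrix.mulVec, dotProduct, hk.ne] using
      congrFun hv ⟨k, hk.trans q.lt_succ_self⟩
  rcases lt_or_ge k q with hkq | hkq
  · exact hrow hkq
  · obtain ⟨k, rfl⟩ := Nat.exists_eq_add_of_le' hkq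
    calc ∑ j : Fin (q + 1), x (k + q + j) * v j
        = c * ∑ j, v j - ∑ j : Fin (q + 1), x (k + j) * v j := by
          rw [mul_sum, ← sum_sub_distrib]
          refine sum_congr rfl fun j _ => ?_
          rw [add_right_comm, ← hx (k + j)]
          ring
      _ = 0 := by
          rw [sum_eq_zero_of_borderedHankel_mulVec_eq_zero hv, hrow (by lia), mul_zero, sub_zero]

end

theorem isUnit_borderedHankel {K : Type*} [Field K] {q : ℕ} (hq : 0 < q) {η : K}
    (hη : IsPrimitiveRoot η (2 * q)) {x : ℕ → K} {c : K} (hx : ∀ k, x (k + q) + x k = c)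
    (hfourier : ∀ ζ : K, ζ ^ q = -1 → ∑ k ∈ range (2 * q), ζ ^ k * x k ≠ 0) :
    IsUnit (borderedHankel q x) := by
  have hper : Function.Periodic x (2 * q) := fun k => by
    have := hx (k + q)
    rw [add_assoc, ← two_mul, ← hx k, add_comm (x _)] at this
    exact add_left_cancel this
  rw [← Matrix.mulVec_injective_iff_isUnit, ← Matrix.coe_mulVecLin, injective_iff_map_eq_zero]
  intro v hv
  refine eq_zero_of_sum_eq_zero_of_sum_pow_mul_eq_zero hq hη
    (sum_eq_zero_of_borderedHankel_mulVec_eq_zero hv) fun ξ hξ => ?_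
  have hξ0 : ξ ≠ 0 := fun h => by simp [h, hq.ne'] at hξ
  have hζ : ξ⁻¹ ^ q = -1 := by rw [inv_pow, hξ, inv_neg_one]
  refine (mul_eq_zero.mp ?_).resolve_right (hfourier ξ⁻¹ hζ)
  rw [sum_pow_mul_mul_sum_pow_mul hper (mul_inv_cancel₀ hξ0) (by rw [pow_mul', hζ, neg_one_sq])]
  exact sum_eq_zero fun k hk => by
    rw [sum_mul_eq_zero_of_borderedHankel_mulVec_eq_zero hx hv (mem_range.mp hk), mul_zero]

theorem isUnit_of_isUnit_map {n R S : Type*} [Fintype n] [DecidableEq n] [CommRing R] [CommRing S]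
    (f : R →+* S) [IsLocalHom f] {A : Matrix n n R} (hA : IsUnit (A.map f)) : IsUnit A := by
  rw [Matrix.isUnit_iff_isUnit_det] at hA ⊢
  exact isUnit_of_map_unit f _ (by rwa [RingHom.map_det])

theorem dh_hankel_matrix_invertible_general {N m : ℕ} (hN : IsPrimePow N) (hN2 : 2 < N)
    (hm : orderOf (m : ZMod N) = N.totient) :
    IsUnit (borderedHankel (N.totient / 2) fun k => ((m ^ k % N : ℕ) : ℚ)) := by
  have hq : 2 * (N.totient / 2) = N.totient := Nat.two_mul_div_two_of_even (Nat.totient_even hN2)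
  have hpos : 0 < N.totient := Nat.totient_pos.mpr (by lia)
  obtain ⟨g, hgm⟩ : IsUnit (m : ZMod N) := (orderOf_pos_iff.mp (hm ▸ hpos)).isUnit
  rw [← hgm, orderOf_units] at hm
  have hx (k : ℕ) : m ^ k % N = ((g : ZMod N) ^ k).val := by
    rw [hgm, ← Nat.cast_pow, ZMod.val_natCast]
  simp only [hx]
  refine isUnit_of_isUnit_map (Rat.castHom ℂ) ?_
  rw [map_borderedHankel]
  refine isUnit_borderedHankel (by lia) (Complex.isPrimitiveRoot_exp _ (by lia)) (c := N)
    (fun k => ?_) fun ζ hζ => ?_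
  · simpa using congrArg (Nat.cast (R := ℂ)) (val_pow_add_half_add_val_pow hN2 hm k)
  · simpa [hq] using sum_pow_mul_val_pow_ne_zero hN hN2 hm hζ

/-- For `p` an odd prime with `p > 3`, `m` a primitive root modulo `p`,
`x k = m ^ k % p`, and `q̃ = (p-1)/2`: the `(q̃+1) × (q̃+1)` rational matrix whose
first `q̃` rows are `(x (k + j))_j` for `k = 0, ..., q̃ - 1` and whose last row
consists of ones is invertible (has full rank `q̃ + 1`). -/
theorem dh_hankel_matrix_invertible (p m : ℕ) (hp : p.Prime) (hp3 : 3 < p)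
    (hm : orderOf (m : ZMod p) = p - 1) :
    IsUnit (Matrix.of (fun k j : Fin ((p - 1) / 2 + 1) =>
      if (k : ℕ) = (p - 1) / 2 then (1 : ℚ)
      else ((m ^ ((k : ℕ) + (j : ℕ)) % p : ℕ) : ℚ))) := by
  have h := dh_hankel_matrix_invertible_general hp.isPrimePow (by lia)
    (hm.trans (Nat.totient_prime hp).symm)
  rwa [Nat.totient_prime hp] at h
end
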